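/- There exists a bidirected necklace grid whose vertical necklaces are bidirected rays that contains no dominated directed necklace grid. -/

import Mathlib

variable {V : Type*}

/-- A finite directed path, given as a nonempty duplicate-free list of vertices. -/
def IsDipath (D : Digraph V) (p : List V) : Prop :=
  p ≠ [] ∧ p.Nodup ∧ p.Chain' D.Adj

def StartsIn (p : List V) (A : Set V) : Prop := ∃ a ∈ A, p.head? = some a

def EndsIn (p : List V) (B : Set V) : Prop := ∃ b ∈ B, p.getLast? = some b

def ListsDisjoint (p q : List V) : Prop := ∀ v ∈ p, v ∉ q

/-- The internal vertices of a path. -/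
def Internals (p : List V) : List V := p.tail.dropLast

def InternallyAvoids (p : List V) (U : Set V) : Prop := ∀ v ∈ Internals p, v ∉ U

/-- Reachability by a directed path with all vertices in `s`. -/
def ReachOn (D : Digraph V) (s : Set V) : V → V → Prop :=
  Relation.ReflTransGen (fun a b => a ∈ s ∧ b ∈ s ∧ D.Adj a b)

def StrongOn (D : Digraph V) (s : Set V) : Prop :=
  ∀ u ∈ s, ∀ v ∈ s, ReachOn D s u v

/-- `H` witnesses that `N` is a necklace. -/
def IsNecklaceWitness (D : Digraph V) (N : Set V) (H : ℕ → Set V) : Prop :=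
  (∀ n, (H n).Finite ∧ (H n).Nonempty ∧ StrongOn D (H n)) ∧
  N = ⋃ n, H n ∧
  ∀ i j : ℕ, (H i ∩ H j).Nonempty ↔ (i ≤ j + 1 ∧ j ≤ i + 1)

/-- The edges of `D` leaving or entering `N` with their `N`-endpoint in `K`. -/
def CrossEdgesAt (D : Digraph V) (N K : Set V) : Set (V × V) :=
  {e | D.Adj e.1 e.2 ∧ ((e.1 ∈ K ∧ e.2 ∉ N) ∨ (e.2 ∈ K ∧ e.1 ∉ N))}

/-- Attachment restrictions for a vertical necklace in a necklace grid: at most one edge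
leaves or enters the necklace in `H ℓ` for odd `ℓ`, no such edge meets
`H ℓ \ (H (ℓ-1) ∪ H (ℓ+1))` for even `ℓ`. -/
def NecklaceAttachOK (D : Digraph V) (N : Set V) (H : ℕ → Set V) : Prop :=
  (∀ l, Odd l → (CrossEdgesAt D N (H l)).Subsingleton) ∧
  (∀ l, Even l → CrossEdgesAt D N (H l \ (H (l - 1) ∪ H (l + 1))) = ∅)

/-- `u v` is an edge of the path `L`. -/
def ConsecIn (L : List V) (u v : V) : Prop := ∃ l₁ l₂, L = l₁ ++ u :: v :: l₂

def NeckUnion (neck : ℕ → Set V) : Set V := ⋃ i, neck i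

/-- `L` meets all necklaces `0, …, n`, meets no other necklace, and meets them in
increasing order. -/
def VisitsUp (neck : ℕ → Set V) (n : ℕ) (L : List V) : Prop :=
  (∀ j ≤ n, ∃ v ∈ L, v ∈ neck j) ∧
  (∀ v ∈ L, ∀ j, v ∈ neck j → j ≤ n) ∧
  ∀ s t, ∀ hs : s < L.length, ∀ ht : t < L.length, s < t → ∀ j j',
    L.get ⟨s, hs⟩ ∈ neck j → L.get ⟨t, ht⟩ ∈ neck j' → j ≤ j'

/-- `L` meets all necklaces `0, …, n`, meets no other necklace, and meets them in
decreasing order. -/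
def VisitsDown (neck : ℕ → Set V) (n : ℕ) (L : List V) : Prop :=
  (∀ j ≤ n, ∃ v ∈ L, v ∈ neck j) ∧
  (∀ v ∈ L, ∀ j, v ∈ neck j → j ≤ n) ∧
  ∀ s t, ∀ hs : s < L.length, ∀ ht : t < L.length, s < t → ∀ j j',
    L.get ⟨s, hs⟩ ∈ neck j → L.get ⟨t, ht⟩ ∈ neck j' → j' ≤ j

/-- Common part of the definition of a (subdivision of a) necklace grid: disjoint
vertical necklaces with attachment restrictions, pairwise disjoint girders occurring at
increasing heights on the necklaces, and every edge lying in a necklace or a girder. -/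
structure IsNecklaceGridBase (G : Digraph V) (neck : ℕ → Set V)
    (H : ℕ → ℕ → Set V) (Gird : ℕ → List V) : Prop where
  disj : ∀ i j, i ≠ j → Disjoint (neck i) (neck j)
  neckwit : ∀ i, IsNecklaceWitness G (neck i) (H i)
  attach : ∀ i, NecklaceAttachOK G (neck i) (H i)
  gpath : ∀ n, 1 ≤ n → IsDipath G (Gird n)
  gdisj : ∀ m n, 1 ≤ m → 1 ≤ n → m ≠ n → ListsDisjoint (Gird m) (Gird n)
  gheight : ∀ m n, 1 ≤ m → m < n → ∀ i l l',
    (∃ v ∈ Gird m, v ∈ H i l) → (∃ v ∈ Gird n, v ∈ H i l') → l < l'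
  edges : ∀ u v, G.Adj u v →
    (∃ i, u ∈ neck i ∧ v ∈ neck i) ∨ ∃ n, 1 ≤ n ∧ ConsecIn (Gird n) u v

/-- A bidirected necklace grid: each girder is an upward staircase from necklace `0` to
necklace `n` followed by a downward staircase back to necklace `0`. -/
def IsBidirNecklaceGrid (G : Digraph V) (neck : ℕ → Set V)
    (H : ℕ → ℕ → Set V) (Gird : ℕ → List V) : Prop :=
  IsNecklaceGridBase G neck H Gird ∧ ∀ n, 1 ≤ n → ∃ U W : List V,
    Gird n = U ++ W ∧ U ≠ [] ∧ W ≠ [] ∧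
    StartsIn U (neck 0) ∧ EndsIn U (neck n) ∧ VisitsUp neck n U ∧
    StartsIn W (neck n) ∧ EndsIn W (neck 0) ∧ VisitsDown neck n W

/-- An outward-oriented dominated directed necklace grid: each girder is an upward
staircase from necklace `0` to necklace `n` followed by an arch back to necklace `0`
internally avoiding all necklaces. -/
def IsDomDirNecklaceGridOut (G : Digraph V) (neck : ℕ → Set V)
    (H : ℕ → ℕ → Set V) (Gird : ℕ → List V) : Prop :=
  IsNecklaceGridBase G neck H Gird ∧ ∀ n, 1 ≤ n → ∃ U W : List V,
    Gird n = U ++ W ∧ U ≠ [] ∧ W ≠ [] ∧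
    StartsIn U (neck 0) ∧ EndsIn U (neck n) ∧ VisitsUp neck n U ∧
    StartsIn W (neck n) ∧ EndsIn W (neck 0) ∧ InternallyAvoids W (NeckUnion neck)

/-- An inward-oriented dominated directed necklace grid: each girder is an arch from
necklace `0` to necklace `n` followed by a downward staircase back to necklace `0`. -/
def IsDomDirNecklaceGridIn (G : Digraph V) (neck : ℕ → Set V)
    (H : ℕ → ℕ → Set V) (Gird : ℕ → List V) : Prop :=
  IsNecklaceGridBase G neck H Gird ∧ ∀ n, 1 ≤ n → ∃ W U : List V,
    Gird n = W ++ U ∧ W ≠ [] ∧ U ≠ [] ∧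
    StartsIn W (neck 0) ∧ EndsIn W (neck n) ∧ InternallyAvoids W (NeckUnion neck) ∧
    StartsIn U (neck n) ∧ EndsIn U (neck 0) ∧ VisitsDown neck n U

/-- The vertical necklaces are bidirected rays `𝒟(S)`. -/
def NecksAreBidirRays (G : Digraph V) (neck : ℕ → Set V) (r : ℕ → ℕ → V) : Prop :=
  ∀ i, Function.Injective (r i) ∧ neck i = Set.range (r i) ∧
    ∀ n, G.Adj (r i n) (r i (n + 1)) ∧ G.Adj (r i (n + 1)) (r i n)

/-- The arches are single edges, `archE n` being the arch of the `n`-th girder. -/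
def ArchesAreEdges (neck : ℕ → Set V) (Gird : ℕ → List V) (archE : ℕ → V × V) : Prop :=
  ∀ n, 1 ≤ n → ∃ U, Gird n = U ++ [(archE n).1, (archE n).2] ∧
    (archE n).1 ∈ neck n ∧ (archE n).2 ∈ neck 0

/-!
The square lattice on the quarter-plane contains no dominated directed necklace grid, for reasons
of planarity, so it suffices to draw a bidirected necklace grid inside it. Of a dominated directed
necklace grid take the necklaces `R 0`, `R 1`, `R 2`. The girder of index `n ≥ 2` links each two
of them off the third: its staircase links `R 0` to `R 1` and `R 1` to `R 2`, while the rest of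
the staircase from `R 2` on, followed by the arch, links `R 2` to `R 0` off `R 1`. Choose an
antidiagonal `x + y = k` that all three necklaces cross, and a foot of each on it, from which all
but finitely many vertices of the necklace are reachable beyond the antidiagonal. A girder far out
then joins any two feet beyond the antidiagonal, off the third necklace. But one foot lies between
the other two, and the walk joining those encloses it, while its necklace is infinite. The
enclosure is a discrete Jordan curve argument that counts crossings with vertical rays modulo `2`.
-/

section Reachability

variable {D E : Digraph V} {s t : Set V} {u v w : V}

theorem ReachOn.mono (h : ReachOn D s u v) (hDE : ∀ a b, D.Adj a b → E.Adj a b) (hst : s ⊆ t) :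
    ReachOn E t u v :=
  Relation.ReflTransGen.mono (fun _ _ h => ⟨hst h.1, hst h.2.1, hDE _ _ h.2.2⟩) _ _ h

theorem ReachOn.mono_set (h : ReachOn D s u v) (hst : s ⊆ t) : ReachOn D t u v :=
  h.mono (fun _ _ => id) hst

theorem ReachOn.trans (huv : ReachOn D s u v) (hvw : ReachOn D s v w) : ReachOn D s u w :=
  Relation.ReflTransGen.trans huv hvw

theorem ReachOn.symm (hD : ∀ a b, D.Adj a b → D.Adj b a) (h : ReachOn D s u v) :
    ReachOn D s v u := by
  induction h with
  | refl => exact .refl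
  | tail _ step ih => exact .head ⟨step.2.1, step.1, hD _ _ step.2.2⟩ ih

theorem ReachOn.mem_right (h : ReachOn D s u v) (hu : u ∈ s) : v ∈ s := by
  cases h with
  | refl => exact hu
  | tail _ h => exact h.2.1

theorem StrongOn.mono (hs : StrongOn D s) (hDE : ∀ a b, D.Adj a b → E.Adj a b) : StrongOn E s :=
  fun u hu v hv => (hs u hu v hv).mono hDE subset_rfl

theorem strongOn_iUnion {H : ℕ → Set V} (hH : ∀ n, StrongOn D (H n))
    (hlink : ∀ n, (H n ∩ H (n + 1)).Nonempty) : StrongOn D (⋃ n, H n) := by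
  have within : ∀ n, ∀ u ∈ H n, ∀ v ∈ H n, ReachOn D (⋃ n, H n) u v :=
    fun n u hu v hv => (hH n u hu v hv).mono_set (Set.subset_iUnion H n)
  obtain ⟨z, hz, -⟩ := hlink 0
  have hub : ∀ n, ∀ v ∈ H n, ReachOn D (⋃ n, H n) z v ∧ ReachOn D (⋃ n, H n) v z := by
    intro n
    induction n with
    | zero => exact fun v hv => ⟨within 0 z hz v hv, within 0 v hv z hz⟩
    | succ n ih =>
      intro v hv
      obtain ⟨x, hx, hx'⟩ := hlink n
      exact ⟨(ih x hx).1.trans (within _ x hx' v hv), (within _ v hv x hx').trans (ih x hx).2⟩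
  intro u hu v hv
  obtain ⟨m, hu⟩ := Set.mem_iUnion.1 hu
  obtain ⟨n, hv⟩ := Set.mem_iUnion.1 hv
  exact (hub m u hu).2.trans (hub n v hv).1

/-- The first `n` steps of `w` form a walk of `D` within `s`. A walk without steps may start
outside `s`, in accordance with the reflexivity of `ReachOn`. -/
def IsWalkOn (D : Digraph V) (s : Set V) (w : ℕ → V) (n : ℕ) : Prop :=
  ∀ t < n, w t ∈ s ∧ w (t + 1) ∈ s ∧ D.Adj (w t) (w (t + 1))

theorem ReachOn.exists_isWalkOn (h : ReachOn D s u v) :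
    ∃ w n, IsWalkOn D s w n ∧ w 0 = u ∧ w n = v := by
  induction h using Relation.ReflTransGen.head_induction_on with
  | refl => exact ⟨fun _ => v, 0, fun _ ht => absurd ht (Nat.not_lt_zero _), rfl, rfl⟩
  | @head u u' step _ ih =>
    obtain ⟨w, n, hw, rfl, hv⟩ := ih
    refine ⟨fun t => Nat.casesOn t u w, n + 1, fun t ht => ?_, rfl, hv⟩
    cases t with
    | zero => exact step
    | succ t => exact hw t (by omega)

theorem reachOn_getElem_of_isChain {L : List V} (hL : L.IsChain D.Adj) {i j : ℕ} (hij : i ≤ j)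
    (hj : j < L.length) (hs : ∀ k (hk : k < L.length), i ≤ k → k ≤ j → L[k] ∈ s) :
    ReachOn D s L[i] L[j] := by
  induction j, hij using Nat.le_induction with
  | base => exact .refl
  | succ j hij ih =>
    exact .tail (ih (by omega) fun k hk hik hkj => hs k hk hik (by omega))
      ⟨hs j _ hij (by omega), hs _ hj (by omega) le_rfl, List.isChain_iff_getElem.1 hL j hj⟩

/-- Some walk of `D` within `s` leads from `A` to `B`. -/
def LinkedOn (D : Digraph V) (s A B : Set V) : Prop :=
  ∃ u ∈ A ∩ s, ∃ v ∈ B ∩ s, ReachOn D s u v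

theorem LinkedOn.mono {A B : Set V} (h : LinkedOn D s A B) (hst : s ⊆ t) : LinkedOn D t A B := by
  obtain ⟨u, hu, v, hv, huv⟩ := h
  exact ⟨u, ⟨hu.1, hst hu.2⟩, v, ⟨hv.1, hst hv.2⟩, huv.mono_set hst⟩

end Reachability

section SquareLattice

/-- The square lattice on the quarter-plane `ℕ × ℕ`, each edge in both directions. -/
def squareLattice : Digraph (ℕ × ℕ) where
  Adj u v := (u.1 = v.1 ∧ (u.2 + 1 = v.2 ∨ v.2 + 1 = u.2)) ∨
    (u.2 = v.2 ∧ (u.1 + 1 = v.1 ∨ v.1 + 1 = u.1))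

theorem squareLattice_adj_symm (u v : ℕ × ℕ) (h : squareLattice.Adj u v) :
    squareLattice.Adj v u := by
  simp only [squareLattice] at *
  omega

/-- The part of the quarter-plane on or beyond the antidiagonal `x + y = k`. -/
def beyond (k : ℕ) : Set (ℕ × ℕ) := {v | k ≤ v.1 + v.2}

theorem finite_compl_beyond (k : ℕ) : (beyond k)ᶜ.Finite := by
  refine ((Set.finite_Iio k).prod (Set.finite_Iio k)).subset fun v hv => ?_
  simp only [beyond, Set.mem_compl_iff, Set.mem_ofPred_eq, Set.mem_prod, Set.mem_Iio] at *
  omega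

theorem exists_reachOn_beyond {s : Set (ℕ × ℕ)} {u v : ℕ × ℕ} {k : ℕ}
    (h : ReachOn squareLattice s u v) (hu : u ∈ beyond k) (hv : v ∉ beyond k) :
    ∃ a, a.1 + a.2 = k ∧ ReachOn squareLattice (s ∩ beyond k) u a := by
  induction h using Relation.ReflTransGen.head_induction_on with
  | refl => exact absurd hu hv
  | @head u u' step _ ih =>
    obtain ⟨hus, hus', adj⟩ := step
    by_cases hk : u.1 + u.2 = k
    · exact ⟨u, hk, .refl⟩
    · have hu' : u' ∈ beyond k := by
        simp only [beyond, squareLattice, Set.mem_ofPred_eq] at *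
        omega
      obtain ⟨a, ha, hua⟩ := ih hu'
      exact ⟨a, ha, .head ⟨⟨hus, hu⟩, ⟨hus', hu'⟩, adj⟩ hua⟩

/-- Indicator that the step from `a` to `b` crosses the vertical ray that starts halfway between
`v` and its right neighbour and goes up. -/
def rayCrossing (v a b : ℕ × ℕ) : ZMod 2 :=
  if v.2 ≤ a.2 ∧ ((a.1 = v.1 ∧ b.1 = v.1 + 1) ∨ (b.1 = v.1 ∧ a.1 = v.1 + 1)) then 1 else 0

/-- The parity of the number of times the first `n` steps of `w` cross the ray of `v`, in the
sense of `rayCrossing`. It plays the role of a winding number. -/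
def crossingParity (w : ℕ → ℕ × ℕ) (n : ℕ) (v : ℕ × ℕ) : ZMod 2 :=
  ∑ t ∈ Finset.range n, rayCrossing v (w t) (w (t + 1))

variable {s : Set (ℕ × ℕ)} {w : ℕ → ℕ × ℕ} {n k : ℕ} {u v : ℕ × ℕ}

theorem crossingParity_eq_sub {f : ℕ × ℕ → ZMod 2}
    (h : ∀ t < n, rayCrossing v (w t) (w (t + 1)) = f (w (t + 1)) - f (w t)) :
    crossingParity w n v = f (w n) - f (w 0) :=
  (Finset.sum_congr rfl fun t ht => h t (Finset.mem_range.1 ht)).trans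
    (Finset.sum_range_sub (fun t => f (w t)) n)

theorem crossingParity_above (hw : IsWalkOn squareLattice s w n) (hv : v ∉ s) :
    crossingParity w n (v.1, v.2 + 1) = crossingParity w n v := by
  refine Finset.sum_congr rfl fun t ht => ?_
  obtain ⟨ha, hb, adj⟩ := hw t (Finset.mem_range.1 ht)
  have hav := Prod.ext_iff.not.1 (ne_of_mem_of_not_mem ha hv)
  have hbv := Prod.ext_iff.not.1 (ne_of_mem_of_not_mem hb hv)
  simp only [squareLattice] at adj
  simp only [rayCrossing]
  congr 1
  apply propext
  omega

/-- The two rays differ by the vertices above `(v.1 + 1, v.2)`, where the walk has no end. -/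
theorem crossingParity_right (hw : IsWalkOn squareLattice s w n) (hv : (v.1 + 1, v.2) ∉ s)
    (hstart : (w 0).1 + (w 0).2 ≤ v.1 + v.2) (hend : (w n).1 + (w n).2 ≤ v.1 + v.2) :
    crossingParity w n (v.1 + 1, v.2) = crossingParity w n v := by
  let above (x : ℕ × ℕ) : ZMod 2 := if x.1 = v.1 + 1 ∧ v.2 < x.2 then 1 else 0
  have step : ∀ t < n, rayCrossing (v.1 + 1, v.2) (w t) (w (t + 1)) -
      rayCrossing v (w t) (w (t + 1)) = above (w (t + 1)) - above (w t) := by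
    intro t ht
    obtain ⟨ha, hb, adj⟩ := hw t ht
    have hav := Prod.ext_iff.not.1 (ne_of_mem_of_not_mem ha hv)
    have hbv := Prod.ext_iff.not.1 (ne_of_mem_of_not_mem hb hv)
    simp only [squareLattice] at adj
    simp only [rayCrossing, above]
    split_ifs <;> first | omega | decide
  have total : crossingParity w n (v.1 + 1, v.2) - crossingParity w n v =
      above (w n) - above (w 0) := by
    rw [crossingParity, crossingParity, ← Finset.sum_sub_distrib,
      ← Finset.sum_range_sub (fun t => above (w t))]
    exact Finset.sum_congr rfl fun t ht => step t (Finset.mem_range.1 ht)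
  rw [← sub_eq_zero, total]
  simp only [above]
  rw [if_neg (by omega), if_neg (by omega), sub_zero]

theorem crossingParity_eq_of_adj (hw : IsWalkOn squareLattice s w n)
    (hstart : (w 0).1 + (w 0).2 = k) (hend : (w n).1 + (w n).2 = k)
    (hu : u ∈ beyond k \ s) (hv : v ∈ beyond k \ s) (huv : squareLattice.Adj u v) :
    crossingParity w n u = crossingParity w n v := by
  obtain ⟨x, y⟩ := u
  obtain ⟨x', y'⟩ := v
  obtain ⟨huk, hus⟩ := hu
  obtain ⟨hvk, hvs⟩ := hv
  rw [← hstart] at huk hvk hend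
  rcases huv with ⟨rfl : x = x', rfl | rfl⟩ | ⟨rfl : y = y', rfl | rfl⟩
  · exact (crossingParity_above hw hus).symm
  · exact crossingParity_above hw hvs
  · exact (crossingParity_right (v := (x, y)) hw hvs huk (hend.trans_le huk)).symm
  · exact crossingParity_right (v := (x', y)) hw hus hvk (hend.trans_le hvk)

theorem crossingParity_eq_one (hw : IsWalkOn squareLattice (beyond k) w n) (hv : v.1 + v.2 = k)
    (hleft : (w 0).1 ≤ v.1) (hright : v.1 < (w n).1) : crossingParity w n v = 1 := by
  let left (x : ℕ × ℕ) : ZMod 2 := if x.1 ≤ v.1 then 1 else 0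
  have step : ∀ t < n, rayCrossing v (w t) (w (t + 1)) = left (w (t + 1)) - left (w t) := by
    intro t ht
    obtain ⟨ha, hb, adj⟩ := hw t ht
    simp only [beyond, squareLattice, Set.mem_ofPred_eq] at ha hb adj
    simp only [rayCrossing, left]
    split_ifs <;> first | omega | decide
  rw [crossingParity_eq_sub step]
  simp only [left]
  rw [if_neg (by omega), if_pos hleft]
  decide

theorem crossingParity_eq_zero (hv : ∀ t ≤ n, (w t).1 + (w t).2 < v.1 + v.2) :
    crossingParity w n v = 0 := by
  refine Finset.sum_eq_zero fun t ht => if_neg ?_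
  have := hv t (Finset.mem_range.1 ht).le
  have := hv (t + 1) (Finset.mem_range.1 ht)
  omega

/-- The crossing parity is constant off the walk, odd between its ends, and even far away. -/
theorem exists_bound_of_enclosed {p q b : ℕ × ℕ}
    (hpq : ReachOn squareLattice (beyond k \ s) p q) (hp : p.1 + p.2 = k) (hq : q.1 + q.2 = k)
    (hb : b.1 + b.2 = k) (hpb : p.1 < b.1) (hbq : b.1 < q.1) :
    ∃ M, ∀ z, ReachOn squareLattice (s ∩ beyond k) b z → z.1 + z.2 < M := by
  obtain ⟨w, n, hw, rfl, rfl⟩ := hpq.exists_isWalkOn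
  obtain ⟨M, hM⟩ := ((Set.finite_le_nat n).image fun t => (w t).1 + (w t).2).bddAbove
  refine ⟨M + 1, fun z hz => ?_⟩
  have odd : crossingParity w n z = 1 := by
    induction hz with
    | refl =>
      exact crossingParity_eq_one (fun t ht => ⟨(hw t ht).1.1, (hw t ht).2.1.1, (hw t ht).2.2⟩)
        hb hpb.le hbq
    | tail _ step ih =>
      obtain ⟨hu, hv, adj⟩ := step
      rw [← ih]
      exact (crossingParity_eq_of_adj hw hp hq ⟨hu.2, fun h => h.2 hu.1⟩
        ⟨hv.2, fun h => h.2 hv.1⟩ adj).symm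
  by_contra! far
  rw [crossingParity_eq_zero fun t ht =>
    (Nat.lt_succ_of_le (hM (Set.mem_image_of_mem _ ht))).trans_le far] at odd
  exact zero_ne_one odd

end SquareLattice

section Necklace

open Filter

variable {D E : Digraph V} {N : Set V} {H : ℕ → Set V}

theorem eventually_disjoint_of_finite {F : Set V} (hF : F.Finite)
    (hH : ∀ v, ∀ᶠ n in atTop, v ∉ H n) : ∀ᶠ n in atTop, Disjoint F (H n) := by
  simp only [Set.disjoint_left]
  exact (eventually_all_finite hF).2 fun v _ => hH v

theorem IsNecklaceWitness.mono (h : IsNecklaceWitness D N H)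
    (hDE : ∀ a b, D.Adj a b → E.Adj a b) : IsNecklaceWitness E N H :=
  ⟨fun n => ⟨(h.1 n).1, (h.1 n).2.1, (h.1 n).2.2.mono hDE⟩, h.2⟩

theorem IsNecklaceWitness.strongOn (h : IsNecklaceWitness D N H) : StrongOn D N := by
  rw [h.2.1]
  exact strongOn_iUnion (fun n => (h.1 n).2.2) fun n => (h.2.2 n (n + 1)).2 (by omega)

theorem IsNecklaceWitness.tail (h : IsNecklaceWitness D N H) (l : ℕ) :
    IsNecklaceWitness D (⋃ n, H (n + l)) fun n => H (n + l) :=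
  ⟨fun n => h.1 (n + l), rfl, fun i j => by rw [h.2.2]; omega⟩

theorem IsNecklaceWitness.nonempty (h : IsNecklaceWitness D N H) : N.Nonempty := by
  rw [h.2.1]
  exact (h.1 0).2.1.mono (Set.subset_iUnion H 0)

theorem IsNecklaceWitness.infinite (h : IsNecklaceWitness D N H) : N.Infinite := by
  choose x hx using fun n => (h.1 n).2.1
  refine Set.infinite_of_injective_forall_mem (f := fun n => x (2 * n)) (fun m n hmn => ?_)
    fun n => h.2.1 ▸ Set.mem_iUnion_of_mem _ (hx (2 * n))
  have meet : (H (2 * m) ∩ H (2 * n)).Nonempty :=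
    ⟨x (2 * m), hx _, Eq.subst (motive := (· ∈ H (2 * n))) hmn.symm (hx _)⟩
  have := (h.2.2 _ _).1 meet
  omega

theorem IsNecklaceWitness.eventually_notMem (h : IsNecklaceWitness D N H) (v : V) :
    ∀ᶠ n in atTop, v ∉ H n := by
  by_cases hv : ∃ m, v ∈ H m
  · obtain ⟨m, hm⟩ := hv
    filter_upwards [eventually_gt_atTop (m + 1)] with n hn hvn
    have := (h.2.2 n m).1 ⟨v, hvn, hm⟩
    omega
  · exact .of_forall (not_exists.1 hv)

theorem IsNecklaceWitness.exists_tail_disjoint (h : IsNecklaceWitness D N H) {F : Set V}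
    (hF : F.Finite) :
    ∃ T ⊆ N, Disjoint F T ∧ T.Nonempty ∧ StrongOn D T ∧ (N \ T).Finite := by
  obtain ⟨l, hl⟩ := eventually_atTop.1 (eventually_disjoint_of_finite hF h.eventually_notMem)
  refine ⟨⋃ n, H (n + l), ?_, Set.disjoint_iUnion_right.2 fun n => hl _ (by omega),
    (h.tail l).nonempty, (h.tail l).strongOn, ?_⟩
  · rw [h.2.1]
    exact Set.iUnion_subset fun n => Set.subset_iUnion H (n + l)
  · refine ((Set.finite_Iio l).biUnion fun n _ => (h.1 n).1).subset fun v hv => ?_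
    obtain ⟨n, hn⟩ := Set.mem_iUnion.1 (h.2.1 ▸ hv.1)
    refine Set.mem_biUnion (Set.mem_Iio.2 <| not_le.1 fun hln => hv.2 ?_) hn
    exact Set.mem_iUnion.2 ⟨n - l, by rwa [Nat.sub_add_cancel hln]⟩

end Necklace

section Obstruction

open Filter Function

/-- A foot of `N` at level `k`: a vertex of `N` on the antidiagonal `x + y = k` from which all but
finitely many vertices of `N` can be reached within `N` without crossing that antidiagonal. -/
def IsFoot (N : Set (ℕ × ℕ)) (k : ℕ) (a : ℕ × ℕ) : Prop :=
  a ∈ N ∧ a.1 + a.2 = k ∧ {v ∈ N | ¬ ReachOn squareLattice (N ∩ beyond k) a v}.Finite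

theorem IsNecklaceWitness.exists_isFoot {N : Set (ℕ × ℕ)} {H : ℕ → Set (ℕ × ℕ)} {k : ℕ}
    {b : ℕ × ℕ} (h : IsNecklaceWitness squareLattice N H) (hb : b ∈ N) (hbk : b.1 + b.2 < k) :
    ∃ a, IsFoot N k a := by
  obtain ⟨T, hTN, hTk, ⟨t, ht⟩, hT, hfin⟩ := h.exists_tail_disjoint (finite_compl_beyond k)
  have hTs : T ⊆ N ∩ beyond k :=
    Set.subset_inter hTN (Set.disjoint_compl_left_iff_subset.1 hTk)
  obtain ⟨a, hak, hta⟩ :=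
    exists_reachOn_beyond (h.strongOn t (hTN ht) b hb) (hTs ht).2 hbk.not_ge
  refine ⟨a, (hta.mem_right (hTs ht)).1, hak, hfin.subset fun v hv => ⟨hv.1, fun hvT => hv.2 ?_⟩⟩
  exact (hta.symm squareLattice_adj_symm).trans ((hT t ht v hvT).mono_set hTs)

theorem IsFoot.not_enclosed {N : Set (ℕ × ℕ)} {k : ℕ} {p q a : ℕ × ℕ} (ha : IsFoot N k a)
    (hN : N.Infinite) (hp : p.1 + p.2 = k) (hq : q.1 + q.2 = k)
    (hpq : ReachOn squareLattice (beyond k \ N) p q) : ¬ (p.1 < a.1 ∧ a.1 < q.1) := by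
  rintro ⟨hpa, haq⟩
  obtain ⟨M, hM⟩ := exists_bound_of_enclosed hpq hp hq ha.2.1 hpa haq
  refine hN ((ha.2.2.union (finite_compl_beyond M)).subset fun v hv => ?_)
  by_cases hav : ReachOn squareLattice (N ∩ beyond k) a v
  · exact .inr (hM v hav).not_ge
  · exact .inl ⟨hv, hav⟩

theorem LinkedOn.reachOn_beyond {N P Q X : Set (ℕ × ℕ)} {k : ℕ} {p q : ℕ × ℕ}
    (h : LinkedOn squareLattice (X \ N) P Q) (hX : X ⊆ beyond k)
    (hNP : Disjoint N P) (hp : ∀ u ∈ P ∩ X, ReachOn squareLattice (P ∩ beyond k) p u)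
    (hNQ : Disjoint N Q) (hq : ∀ v ∈ Q ∩ X, ReachOn squareLattice (Q ∩ beyond k) q v) :
    ReachOn squareLattice (beyond k \ N) p q := by
  obtain ⟨u, ⟨huP, huX, -⟩, v, ⟨hvQ, hvX, -⟩, huv⟩ := h
  have sub {S : Set (ℕ × ℕ)} (hNS : Disjoint N S) : S ∩ beyond k ⊆ beyond k \ N :=
    fun x hx => ⟨hx.2, Set.disjoint_right.1 hNS hx.1⟩
  have hpu := (hp u ⟨huP, huX⟩).mono_set (sub hNP)
  have hvq := ((hq v ⟨hvQ, hvX⟩).mono_set (sub hNQ)).symm squareLattice_adj_symm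
  exact (hpu.trans (huv.mono_set (Set.sdiff_subset_sdiff_left hX))).trans hvq

variable {N : Fin 3 → Set (ℕ × ℕ)} {H : Fin 3 → ℕ → Set (ℕ × ℕ)} {X : ℕ → Set (ℕ × ℕ)}

theorem exists_forall_isFoot (hH : ∀ i, IsNecklaceWitness squareLattice (N i) (H i)) :
    ∃ (k : ℕ) (a : Fin 3 → ℕ × ℕ), ∀ i, IsFoot (N i) k (a i) := by
  choose b hb using fun i => (hH i).nonempty
  obtain ⟨m, hm⟩ := (Set.finite_range fun i => (b i).1 + (b i).2).bddAbove
  choose a ha using fun i =>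
    (hH i).exists_isFoot (hb i) (Nat.lt_succ_of_le (hm (Set.mem_range_self i)))
  exact ⟨m + 1, a, ha⟩

theorem exists_pairwise_reachOn (hN : Pairwise (Disjoint on N)) {k : ℕ}
    {a : Fin 3 → ℕ × ℕ} (ha : ∀ i, IsFoot (N i) k (a i)) (hX : Pairwise (Disjoint on X))
    (hlink : ∀ n i, LinkedOn squareLattice (X n \ N i) (N (i + 1)) (N (i + 2))) (i : Fin 3) :
    ReachOn squareLattice (beyond k \ N i) (a (i + 1)) (a (i + 2)) := by
  let unreached (i : Fin 3) : Set (ℕ × ℕ) :=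
    {v ∈ N i | ¬ ReachOn squareLattice (N i ∩ beyond k) (a i) v}
  have hfin : ((beyond k)ᶜ ∪ ⋃ i, unreached i).Finite :=
    (finite_compl_beyond k).union (Set.finite_iUnion fun i => (ha i).2.2)
  have hpoint (v) : ∀ᶠ n in atTop, v ∉ X n := by
    by_cases hv : ∃ m, v ∈ X m
    · obtain ⟨m, hm⟩ := hv
      filter_upwards [eventually_ne_atTop m] with n hn hvn
      exact Set.disjoint_left.1 (hX hn) hvn hm
    · exact .of_forall (not_exists.1 hv)
  obtain ⟨n, hn⟩ := (eventually_disjoint_of_finite hfin hpoint).exists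
  obtain ⟨hk, hU⟩ := Set.disjoint_union_left.1 hn
  have reach (j : Fin 3) : ∀ u ∈ N j ∩ X n, ReachOn squareLattice (N j ∩ beyond k) (a j) u :=
    fun u hu => by_contra fun h =>
      Set.disjoint_left.1 (Set.disjoint_iUnion_left.1 hU j) ⟨hu.1, h⟩ hu.2
  exact (hlink n i).reachOn_beyond (Set.disjoint_compl_left_iff_subset.1 hk)
    (hN (by decide +revert)) (reach _) (hN (by decide +revert)) (reach _)

/-- Of three feet on the antidiagonal, the middle one is enclosed by the walk that joins the other
two. -/
theorem not_pairwise_linkedOn (hN : Pairwise (Disjoint on N))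
    (hH : ∀ i, IsNecklaceWitness squareLattice (N i) (H i))
    (hX : Pairwise (Disjoint on X)) :
    ¬ ∀ n i, LinkedOn squareLattice (X n \ N i) (N (i + 1)) (N (i + 2)) := by
  intro hlink
  obtain ⟨k, a, ha⟩ := exists_forall_isFoot hH
  have walk := exists_pairwise_reachOn hN ha hX hlink
  have outside (i : Fin 3) : ¬ ((a (i + 1)).1 < (a i).1 ∧ (a i).1 < (a (i + 2)).1) :=
    (ha i).not_enclosed (hH i).infinite (ha _).2.1 (ha _).2.1 (walk i)
  have outside' (i : Fin 3) : ¬ ((a (i + 2)).1 < (a i).1 ∧ (a i).1 < (a (i + 1)).1) :=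
    (ha i).not_enclosed (hH i).infinite (ha _).2.1 (ha _).2.1
      ((walk i).symm squareLattice_adj_symm)
  have apart {i j : Fin 3} (hij : i ≠ j) : (a i).1 ≠ (a j).1 := by
    intro h
    have eq : a i = a j := Prod.ext h (by have := (ha i).2.1; have := (ha j).2.1; omega)
    exact Set.disjoint_left.1 (hN hij) (ha i).1 (eq ▸ (ha j).1)
  have h01 : (a 0).1 ≠ (a 1).1 := apart (by decide)
  have h12 : (a 1).1 ≠ (a 2).1 := apart (by decide)
  have h02 : (a 0).1 ≠ (a 2).1 := apart (by decide)
  obtain h | h | h | h | h | h :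
      ((a 1).1 < (a 0).1 ∧ (a 0).1 < (a 2).1) ∨ ((a 2).1 < (a 0).1 ∧ (a 0).1 < (a 1).1) ∨
      ((a 2).1 < (a 1).1 ∧ (a 1).1 < (a 0).1) ∨ ((a 0).1 < (a 1).1 ∧ (a 1).1 < (a 2).1) ∨
      ((a 0).1 < (a 2).1 ∧ (a 2).1 < (a 1).1) ∨ ((a 1).1 < (a 2).1 ∧ (a 2).1 < (a 0).1) := by
    omega
  exacts [outside 0 h, outside' 0 h, outside 1 h, outside' 1 h, outside 2 h, outside' 2 h]

end Obstruction

section Girder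

open Function

variable {D : Digraph V} {R : ℕ → Set V} {n : ℕ} {L U W : List V}

theorem eq_of_mem_of_mem (hR : Pairwise (Disjoint on R)) {v : V} {i j : ℕ} (hi : v ∈ R i)
    (hj : v ∈ R j) : i = j :=
  hR.eq (Set.not_disjoint_iff.2 ⟨v, hi, hj⟩)

theorem visitsUp_iff : VisitsUp R n L ↔ (∀ j ≤ n, ∃ v ∈ L, v ∈ R j) ∧
    (∀ v ∈ L, ∀ j, v ∈ R j → j ≤ n) ∧ L.Pairwise fun u v => ∀ i j, u ∈ R i → v ∈ R j → i ≤ j := by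
  rw [List.pairwise_iff_getElem]
  rfl

theorem visitsDown_reverse : VisitsDown R n L.reverse ↔ VisitsUp R n L := by
  have pairwise : VisitsDown R n L.reverse ↔ (∀ j ≤ n, ∃ v ∈ L.reverse, v ∈ R j) ∧
      (∀ v ∈ L.reverse, ∀ j, v ∈ R j → j ≤ n) ∧
      L.reverse.Pairwise fun u v => ∀ i j, u ∈ R i → v ∈ R j → j ≤ i := by
    rw [List.pairwise_iff_getElem]
    rfl
  rw [pairwise, visitsUp_iff, List.pairwise_reverse]
  simp only [List.mem_reverse]
  have swap (u v : V) : (∀ i j, v ∈ R i → u ∈ R j → j ≤ i) ↔ ∀ i j, u ∈ R i → v ∈ R j → i ≤ j :=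
    ⟨fun h i j hi hj => h j i hj hi, fun h i j hi hj => h j i hj hi⟩
  simp only [swap]

theorem visitsUp_reverse : VisitsUp R n L.reverse ↔ VisitsDown R n L := by
  rw [← visitsDown_reverse, List.reverse_reverse]

theorem startsIn_reverse {A : Set V} : StartsIn L.reverse A ↔ EndsIn L A := by
  simp only [StartsIn, EndsIn, List.head?_reverse]

theorem endsIn_reverse {A : Set V} : EndsIn L.reverse A ↔ StartsIn L A := by
  simp only [StartsIn, EndsIn, List.getLast?_reverse]

theorem internallyAvoids_reverse {A : Set V} :
    InternallyAvoids L.reverse A ↔ InternallyAvoids L A := by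
  simp only [InternallyAvoids, Internals, List.tail_reverse, List.dropLast_reverse,
    List.mem_reverse, List.tail_dropLast]

theorem mem_internals_or_eq {v : V} (hv : v ∈ L) :
    v ∈ Internals L ∨ L.head? = some v ∨ L.getLast? = some v := by
  cases L with
  | nil => cases hv
  | cons a l =>
    rcases List.mem_cons.1 hv with rfl | hv
    · exact .inr (.inl rfl)
    · rw [← List.dropLast_append_getLast (List.ne_nil_of_mem hv), List.mem_append,
        List.mem_singleton] at hv
      refine hv.imp id fun h => .inr ?_
      rw [h, List.getLast?_cons, List.getLast?_eq_getLast_of_ne_nil]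
      rfl

theorem InternallyAvoids.eq_or_eq (hR : Pairwise (Disjoint on R))
    (hW : InternallyAvoids W (NeckUnion R)) {i j m : ℕ} (hi : StartsIn W (R i))
    (hj : EndsIn W (R j)) {v : V} (hv : v ∈ W) (hm : v ∈ R m) : m = i ∨ m = j := by
  obtain ⟨a, ha, hWa⟩ := hi
  obtain ⟨b, hb, hWb⟩ := hj
  rcases mem_internals_or_eq hv with h | h | h
  · exact absurd (Set.mem_iUnion_of_mem m hm) (hW v h)
  · obtain rfl : a = v := Option.some.inj (hWa.symm.trans h)
    exact .inl (eq_of_mem_of_mem hR hm ha)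
  · obtain rfl : b = v := Option.some.inj (hWb.symm.trans h)
    exact .inr (eq_of_mem_of_mem hR hm hb)

theorem VisitsUp.le (h : VisitsUp R n L) (hR : Pairwise (Disjoint on R)) {s t i j : ℕ}
    (hst : s ≤ t) (ht : t < L.length) (hi : L[s] ∈ R i) (hj : L[t] ∈ R j) : i ≤ j := by
  rcases hst.eq_or_lt with rfl | hst
  · exact (eq_of_mem_of_mem hR hi hj).le
  · exact h.2.2 s t (hst.trans ht) ht hst i j hi hj

theorem VisitsUp.linkedOn (h : VisitsUp R n L) (hR : Pairwise (Disjoint on R))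
    (hL : L.IsChain D.Adj) {i j : ℕ} (hij : i < j) (hj : j ≤ n) :
    LinkedOn D {v | v ∈ L ∧ ∀ m, v ∈ R m → i ≤ m ∧ m ≤ j} (R i) (R j) := by
  obtain ⟨u, hu, hui⟩ := h.1 i (hij.le.trans hj)
  obtain ⟨v, hv, hvj⟩ := h.1 j hj
  obtain ⟨s, hs, rfl⟩ := List.getElem_of_mem hu
  obtain ⟨t, ht, rfl⟩ := List.getElem_of_mem hv
  have hst : s ≤ t := not_lt.1 fun hts => hij.not_ge (h.le hR hts.le hs hvj hui)
  have mem (k) (hk : k < L.length) (hsk : s ≤ k) (hkt : k ≤ t) :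
      L[k] ∈ {v | v ∈ L ∧ ∀ m, v ∈ R m → i ≤ m ∧ m ≤ j} :=
    ⟨List.getElem_mem hk, fun m hm => ⟨h.le hR hsk hk hui hm, h.le hR hkt ht hm hvj⟩⟩
  exact ⟨L[s], ⟨hui, mem s hs le_rfl hst⟩, L[t], ⟨hvj, mem t ht hst le_rfl⟩,
    reachOn_getElem_of_isChain hL hst ht mem⟩

/-- `U ++ W` is a walk of `D` that first ascends the family `R` up to `R n` and then returns to
`R 0` by an arch. This is the common shape of the girders of both orientations of a dominated
directed necklace grid, up to reversal. -/
structure IsArchedStaircase (D : Digraph V) (R : ℕ → Set V) (n : ℕ) (U W : List V) : Prop where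
  isChain : (U ++ W).IsChain D.Adj
  visitsUp : VisitsUp R n U
  startsIn : StartsIn W (R n)
  endsIn : EndsIn W (R 0)
  internallyAvoids : InternallyAvoids W (NeckUnion R)

theorem IsArchedStaircase.linkedOn_zero (h : IsArchedStaircase D R n U W)
    (hR : Pairwise (Disjoint on R)) {j : ℕ} (hj : j ≤ n) :
    LinkedOn D {v | v ∈ U ++ W ∧ ∀ m, v ∈ R m → m = 0 ∨ j ≤ m} (R j) (R 0) := by
  obtain ⟨u, hu, huj⟩ := h.visitsUp.1 j hj
  obtain ⟨s, hs, rfl⟩ := List.getElem_of_mem hu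
  obtain ⟨z, hz, hWz⟩ := h.endsIn
  obtain ⟨t, ht, hzt⟩ : ∃ t, ∃ ht : t < W.length, W[t] = z :=
    List.getElem_of_mem (List.mem_of_getLast? hWz)
  have mem (k) (hk : k < (U ++ W).length) (hsk : s ≤ k) :
      (U ++ W)[k] ∈ {v | v ∈ U ++ W ∧ ∀ m, v ∈ R m → m = 0 ∨ j ≤ m} := by
    refine ⟨List.getElem_mem hk, fun m hm => ?_⟩
    by_cases hkU : k < U.length
    · rw [List.getElem_append_left hkU] at hm
      exact .inr (h.visitsUp.le hR hsk hkU huj hm)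
    · rw [List.getElem_append_right (not_lt.1 hkU)] at hm
      rcases h.internallyAvoids.eq_or_eq hR h.startsIn h.endsIn (List.getElem_mem _) hm
        with rfl | h0
      exacts [.inr hj, .inl h0]
  have htUW : U.length + t < (U ++ W).length := by rw [List.length_append]; omega
  have walk := reachOn_getElem_of_isChain h.isChain (by omega : s ≤ U.length + t) htUW
    fun k hk hsk _ => mem k hk hsk
  refine ⟨_, ⟨?_, mem s (by omega) le_rfl⟩, _, ⟨?_, mem _ htUW (by omega)⟩, walk⟩
  · rwa [List.getElem_append_left hs]
  · rw [List.getElem_append_right (Nat.le_add_right _ _)]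
    simpa only [Nat.add_sub_cancel_left, hzt] using hz

theorem IsArchedStaircase.linkedOn_fin_three (h : IsArchedStaircase D R (n + 2) U W)
    (hR : Pairwise (Disjoint on R)) {X : Set V} (hX : ∀ v ∈ U ++ W, v ∈ X) (i : Fin 3) :
    LinkedOn D (X \ R i) (R ↑(i + 1)) (R ↑(i + 2)) := by
  have hU := h.isChain.left_of_append
  have hUX : ∀ v ∈ U, v ∈ X := fun v hv => hX v (List.mem_append_left W hv)
  match i with
  | 0 =>
    refine (h.visitsUp.linkedOn hR hU (by decide : 1 < 2) (by omega)).mono fun v hv => ?_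
    exact ⟨hUX v hv.1, fun hv0 => by have := hv.2 0 hv0; omega⟩
  | 1 =>
    refine (h.linkedOn_zero hR (by omega : 2 ≤ n + 2)).mono fun v hv => ?_
    exact ⟨hX v hv.1, fun hv1 => by have := hv.2 1 hv1; omega⟩
  | 2 =>
    refine (h.visitsUp.linkedOn hR hU (by decide : 0 < 1) (by omega)).mono fun v hv => ?_
    exact ⟨hUX v hv.1, fun hv2 => by have := hv.2 2 hv2; omega⟩

variable {B : Digraph V} {H : ℕ → ℕ → Set V} {Gird : ℕ → List V}

theorem IsDomDirNecklaceGridOut.exists_isArchedStaircase (hB : IsDomDirNecklaceGridOut B R H Gird)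
    (hBD : ∀ u v, B.Adj u v → D.Adj u v) (hn : 1 ≤ n) :
    ∃ U W, IsArchedStaircase D R n U W ∧ ∀ v ∈ U ++ W, v ∈ Gird n := by
  obtain ⟨U, W, hUW, -, -, -, -, hU, hWn, hW0, hW⟩ := hB.2 n hn
  exact ⟨U, W, ⟨hUW ▸ (hB.1.gpath n hn).2.2.imp hBD, hU, hWn, hW0, hW⟩, fun v hv => hUW ▸ hv⟩

theorem IsDomDirNecklaceGridIn.exists_isArchedStaircase (hB : IsDomDirNecklaceGridIn B R H Gird)
    (hBD : ∀ u v, B.Adj u v → D.Adj u v) (hD : ∀ u v, D.Adj u v → D.Adj v u) (hn : 1 ≤ n) :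
    ∃ U W, IsArchedStaircase D R n U W ∧ ∀ v ∈ U ++ W, v ∈ Gird n := by
  obtain ⟨W, U, hWU, -, -, hW0, hWn, hW, -, -, hU⟩ := hB.2 n hn
  have rev : U.reverse ++ W.reverse = (Gird n).reverse := by rw [hWU, List.reverse_append]
  refine ⟨U.reverse, W.reverse, ⟨?_, visitsUp_reverse.2 hU, startsIn_reverse.2 hWn,
    endsIn_reverse.2 hW0, internallyAvoids_reverse.2 hW⟩, fun v hv => ?_⟩
  · rw [rev, List.isChain_reverse]
    exact (hB.1.gpath n hn).2.2.imp fun u v huv => hD u v (hBD u v huv)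
  · exact List.mem_reverse.1 (rev ▸ hv)

theorem not_isNecklaceGridBase_of_isArchedStaircase {B : Digraph (ℕ × ℕ)} {R : ℕ → Set (ℕ × ℕ)}
    {H : ℕ → ℕ → Set (ℕ × ℕ)} {Gird : ℕ → List (ℕ × ℕ)}
    (hB : ∀ u v, B.Adj u v → squareLattice.Adj u v)
    (hshape : ∀ n, 1 ≤ n → ∃ U W, IsArchedStaircase squareLattice R n U W ∧
      ∀ v ∈ U ++ W, v ∈ Gird n) :
    ¬ IsNecklaceGridBase B R H Gird := by
  intro base
  have hR : Pairwise (Disjoint on R) := fun i j hij => base.disj i j hij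
  have hGird : Pairwise (Disjoint on fun n => {v | v ∈ Gird (n + 2)}) := fun m n hmn =>
    Set.disjoint_left.2 (base.gdisj _ _ (by omega) (by omega) (by omega))
  refine not_pairwise_linkedOn (N := fun i : Fin 3 => R i) (hR.comp_of_injective Fin.val_injective)
    (fun i => (base.neckwit i).mono hB) hGird fun n i => ?_
  obtain ⟨U, W, hUW, hmem⟩ := hshape (n + 2) (by omega)
  exact hUW.linkedOn_fin_three hR hmem i

theorem not_isDomDirNecklaceGrid_of_le_squareLattice {B : Digraph (ℕ × ℕ)} {R : ℕ → Set (ℕ × ℕ)}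
    {H : ℕ → ℕ → Set (ℕ × ℕ)} {Gird : ℕ → List (ℕ × ℕ)}
    (hB : ∀ u v, B.Adj u v → squareLattice.Adj u v) :
    ¬ (IsDomDirNecklaceGridOut B R H Gird ∨ IsDomDirNecklaceGridIn B R H Gird) := by
  rintro (hout | hin)
  · exact not_isNecklaceGridBase_of_isArchedStaircase hB
      (fun n hn => hout.exists_isArchedStaircase hB hn) hout.1
  · exact not_isNecklaceGridBase_of_isArchedStaircase hB
      (fun n hn => hin.exists_isArchedStaircase hB squareLattice_adj_symm hn) hin.1

end Girder

section StaircaseGrid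

/-- The `i`-th vertical ray of the quarter-plane. -/
def column (i : ℕ) : Set (ℕ × ℕ) := {v | v.1 = i}

/-- The `l`-th piece in the witness that `column i` is a necklace: two consecutive vertices. -/
def bead (i l : ℕ) : Set (ℕ × ℕ) := {(i, l), (i, l + 1)}

/-- The `t`-th vertex of the staircase that starts at `(0, h)` and alternately climbs two steps
within a column and moves one step to the right. -/
def stair (h t : ℕ) : ℕ × ℕ := (t / 3, h + 2 * (t / 3) + t % 3)

/-- The edges of the staircase `stair h`. The vertical edges are not confined to the staircase,
since all of them belong to `staircaseGrid`. -/
def StairStep (h : ℕ) (u v : ℕ × ℕ) : Prop :=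
  (u.1 = v.1 ∧ u.2 + 1 = v.2) ∨ (u.1 + 1 = v.1 ∧ u.2 = v.2 ∧ u.2 = h + 2 * u.1 + 2)

/-- The path formed by the first `m` vertices of the staircase `stair h`. -/
def stairPath (h m : ℕ) : List (ℕ × ℕ) := (List.range m).map (stair h)

/-- The `n`-th girder: a staircase up to column `n`, followed by a staircase directly above it that
is traversed back to column `0`. Girders start `8` apart, so that in each column the four horizontal
edges of a girder lie in distinct beads of odd index. -/
def girder (n : ℕ) : List (ℕ × ℕ) :=
  stairPath (8 * n) (3 * n + 3) ++ (stairPath (8 * n + 3) (3 * n + 1)).reverse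

/-- The bidirected necklace grid on the quarter-plane: bidirected columns joined by the girders. -/
def staircaseGrid : Digraph (ℕ × ℕ) where
  Adj u v := (u.1 = v.1 ∧ (u.2 + 1 = v.2 ∨ v.2 + 1 = u.2)) ∨ ∃ n, 1 ≤ n ∧ ConsecIn (girder n) u v

variable {h m n i l t : ℕ} {u v : ℕ × ℕ}

theorem mem_bead : v ∈ bead i l ↔ v.1 = i ∧ (v.2 = l ∨ v.2 = l + 1) := by
  simp only [bead, Set.mem_insert_iff, Set.mem_singleton_iff, Prod.ext_iff]
  omega

theorem stairStep_stair (h t : ℕ) : StairStep h (stair h t) (stair h (t + 1)) := by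
  simp only [StairStep, stair]
  omega

theorem stair_injective (h : ℕ) : Function.Injective (stair h) := by
  intro s t hst
  simp only [stair, Prod.mk.injEq] at hst
  omega

theorem isChain_stairPath (h m : ℕ) : (stairPath h m).IsChain (StairStep h) := by
  rw [stairPath, List.isChain_map, List.isChain_range]
  exact fun t _ => stairStep_stair h t

theorem nodup_stairPath (h m : ℕ) : (stairPath h m).Nodup :=
  List.nodup_range.map (stair_injective h)

theorem mem_stairPath : v ∈ stairPath h m ↔ ∃ t < m, stair h t = v := by
  simp only [stairPath, List.mem_map, List.mem_range]

theorem stairPath_ne_nil : stairPath h (t + 1) ≠ [] := by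
  rw [stairPath, Ne, List.map_eq_nil_iff, List.range_eq_nil]
  exact t.succ_ne_zero

theorem head?_stairPath : (stairPath h (t + 1)).head? = some (stair h 0) := by
  rw [stairPath, List.head?_map, List.head?_range, if_neg t.succ_ne_zero, Option.map_some]

theorem getLast?_stairPath : (stairPath h (t + 1)).getLast? = some (stair h t) := by
  rw [stairPath, List.getLast?_map, List.getLast?_range, if_neg t.succ_ne_zero, Option.map_some,
    Nat.add_sub_cancel]

theorem startsIn_stairPath : StartsIn (stairPath h (t + 1)) (column 0) :=
  ⟨stair h 0, rfl, head?_stairPath⟩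

theorem endsIn_stairPath (ht : t / 3 = n) : EndsIn (stairPath h (t + 1)) (column n) :=
  ⟨stair h t, ht, getLast?_stairPath⟩

theorem visitsUp_stairPath (hm : 3 * n < m) (hm' : m ≤ 3 * n + 3) :
    VisitsUp column n (stairPath h m) := by
  refine visitsUp_iff.2 ⟨fun j hj => ?_, fun v hv j hvj => ?_, ?_⟩
  · refine ⟨stair h (3 * j), mem_stairPath.2 ⟨3 * j, by omega, rfl⟩, ?_⟩
    exact Nat.mul_div_cancel_left j three_pos
  · obtain ⟨t, ht, rfl⟩ := mem_stairPath.1 hv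
    simp only [column, stair, Set.mem_ofPred_eq] at hvj
    omega
  · rw [stairPath, List.pairwise_map]
    refine List.pairwise_lt_range.imp fun {s t} hst i j hi hj => ?_
    simp only [column, stair, Set.mem_ofPred_eq] at hi hj
    omega

theorem bounds_of_mem_girder (hv : v ∈ girder n) :
    v.1 ≤ n ∧ 8 * n + 2 * v.1 ≤ v.2 ∧ v.2 ≤ 8 * n + 2 * v.1 + 5 := by
  simp only [girder, List.mem_append, List.mem_reverse, mem_stairPath] at hv
  rcases hv with ⟨t, ht, rfl⟩ | ⟨t, ht, rfl⟩ <;> simp only [stair] <;> omega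

theorem nodup_girder (n : ℕ) : (girder n).Nodup := by
  refine (nodup_stairPath _ _).append (List.nodup_reverse.2 (nodup_stairPath _ _)) ?_
  intro v hU hW
  obtain ⟨s, -, rfl⟩ := mem_stairPath.1 hU
  obtain ⟨t, -, hst⟩ := mem_stairPath.1 (List.mem_reverse.1 hW)
  simp only [stair, Prod.mk.injEq] at hst
  omega

theorem isChain_girder (n : ℕ) :
    (girder n).IsChain fun u v => StairStep (8 * n) u v ∨ StairStep (8 * n + 3) v u := by
  refine List.isChain_append.2 ⟨(isChain_stairPath _ _).imp fun _ _ => .inl,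
    List.isChain_reverse.2 ((isChain_stairPath _ _).imp fun _ _ => .inr), ?_⟩
  intro u hu v hv
  rw [getLast?_stairPath, Option.mem_some] at hu
  rw [List.head?_reverse, getLast?_stairPath, Option.mem_some] at hv
  refine .inl (.inl ?_)
  simp only [← hu, ← hv, stair]
  omega

theorem stairStep_of_consecIn_girder (h : ConsecIn (girder n) u v) :
    StairStep (8 * n) u v ∨ StairStep (8 * n + 3) v u := by
  obtain ⟨l₁, l₂, h⟩ := h
  exact List.isChain_iff_forall_rel_of_append_cons_cons.1 (isChain_girder n) h

theorem squareLattice_adj_of_staircaseGrid (u v : ℕ × ℕ) (huv : staircaseGrid.Adj u v) :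
    squareLattice.Adj u v := by
  rcases huv with huv | ⟨n, -, huv⟩
  · exact .inl huv
  · have := stairStep_of_consecIn_girder huv
    simp only [StairStep, squareLattice] at *
    omega

theorem exists_height_of_staircaseGrid_adj (huv : staircaseGrid.Adj u v) (hne : u.1 ≠ v.1) :
    ∃ n, u.2 = v.2 ∧ (u.1 + 1 = v.1 ∧ u.2 = 8 * n + 2 * u.1 + 2 ∨
      v.1 + 1 = u.1 ∧ u.2 = 8 * n + 2 * v.1 + 5) := by
  rcases huv with huv | ⟨n, -, huv⟩
  · exact absurd huv.1 hne
  · have := stairStep_of_consecIn_girder huv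
    simp only [StairStep] at this
    exact ⟨n, by omega⟩

theorem staircaseGrid_adj_above (i l : ℕ) : staircaseGrid.Adj (i, l) (i, l + 1) :=
  .inl ⟨rfl, .inl rfl⟩

theorem staircaseGrid_adj_below (i l : ℕ) : staircaseGrid.Adj (i, l + 1) (i, l) :=
  .inl ⟨rfl, .inr rfl⟩

theorem strongOn_bead (i l : ℕ) : StrongOn staircaseGrid (bead i l) := by
  have up : ReachOn staircaseGrid (bead i l) (i, l) (i, l + 1) :=
    .single ⟨.inl rfl, .inr rfl, staircaseGrid_adj_above i l⟩
  have down : ReachOn staircaseGrid (bead i l) (i, l + 1) (i, l) :=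
    .single ⟨.inr rfl, .inl rfl, staircaseGrid_adj_below i l⟩
  rintro u (rfl | rfl) v (rfl | rfl)
  exacts [.refl, up, down, .refl]

theorem inter_bead_nonempty_iff (i j l : ℕ) :
    (bead i j ∩ bead i l).Nonempty ↔ j ≤ l + 1 ∧ l ≤ j + 1 := by
  constructor
  · rintro ⟨v, hj, hl⟩
    rw [mem_bead] at hj hl
    omega
  · intro hjl
    refine ⟨(i, max j l), ?_, ?_⟩ <;> rw [mem_bead] <;> omega

theorem isNecklaceWitness_column (i : ℕ) :
    IsNecklaceWitness staircaseGrid (column i) (bead i) := by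
  refine ⟨fun l => ⟨(Set.finite_singleton _).insert _, ⟨(i, l), .inl rfl⟩, strongOn_bead i l⟩, ?_,
    inter_bead_nonempty_iff i⟩
  ext v
  simp only [column, Set.mem_ofPred_eq, Set.mem_iUnion, mem_bead]
  exact ⟨fun hv => ⟨v.2, hv, .inl rfl⟩, fun ⟨_, hv, _⟩ => hv⟩

theorem bead_subset_bead_pred_union_bead_succ (i l : ℕ) :
    bead i l ⊆ bead i (l - 1) ∪ bead i (l + 1) := by
  intro v hv
  simp only [mem_bead, Set.mem_union] at *
  omega

theorem necklaceAttachOK_column (i : ℕ) :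
    NecklaceAttachOK staircaseGrid (column i) (bead i) := by
  refine ⟨fun l hl e he e' he' => ?_, fun l _ => ?_⟩
  · obtain ⟨c, rfl⟩ := hl
    obtain ⟨hadj, he⟩ := he
    obtain ⟨hadj', he'⟩ := he'
    simp only [mem_bead, column, Set.mem_ofPred_eq] at he he'
    obtain ⟨n, hn⟩ := exists_height_of_staircaseGrid_adj hadj (by omega)
    obtain ⟨n', hn'⟩ := exists_height_of_staircaseGrid_adj hadj' (by omega)
    rw [Prod.ext_iff, Prod.ext_iff, Prod.ext_iff]
    omega
  · rw [Set.sdiff_eq_empty.2 (bead_subset_bead_pred_union_bead_succ i l)]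
    simp [CrossEdgesAt]

theorem isNecklaceGridBase_staircaseGrid :
    IsNecklaceGridBase staircaseGrid column bead girder where
  disj i j hij := Set.disjoint_left.2 fun v hi hj => hij (hi.symm.trans hj)
  neckwit := isNecklaceWitness_column
  attach := necklaceAttachOK_column
  gpath n hn := ⟨List.append_ne_nil_of_left_ne_nil stairPath_ne_nil _, nodup_girder n,
    List.isChain_iff_forall_rel_of_append_cons_cons.2 fun u v l₁ l₂ h =>
      .inr ⟨n, hn, l₁, l₂, h⟩⟩
  gdisj m n _ _ hmn v hm hn := by
    have := bounds_of_mem_girder hm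
    have := bounds_of_mem_girder hn
    omega
  gheight m n _ hmn i l l' := by
    rintro ⟨u, hu, hul⟩ ⟨v, hv, hvl⟩
    have := bounds_of_mem_girder hu
    have := bounds_of_mem_girder hv
    rw [mem_bead] at hul hvl
    omega
  edges u v huv := huv.imp (fun h => ⟨u.1, rfl, h.1.symm⟩) id

theorem isBidirNecklaceGrid_staircaseGrid :
    IsBidirNecklaceGrid staircaseGrid column bead girder :=
  ⟨isNecklaceGridBase_staircaseGrid, fun n _ => ⟨_, _, rfl,
    stairPath_ne_nil, List.reverse_ne_nil_iff.2 stairPath_ne_nil,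
    startsIn_stairPath, endsIn_stairPath (by omega), visitsUp_stairPath (by omega) le_rfl,
    startsIn_reverse.2 (endsIn_stairPath (by omega)), endsIn_reverse.2 startsIn_stairPath,
    visitsDown_reverse.2 (visitsUp_stairPath (by omega) (by omega))⟩⟩

theorem necksAreBidirRays_column :
    NecksAreBidirRays staircaseGrid column fun i l => (i, l) := fun i =>
  ⟨Prod.mk_right_injective i, Set.ext fun v => ⟨fun hv => ⟨v.2, Prod.ext (Eq.symm hv) rfl⟩,
    fun ⟨_, h⟩ => h ▸ rfl⟩, fun l => ⟨staircaseGrid_adj_above i l, staircaseGrid_adj_below i l⟩⟩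

end StaircaseGrid

/-- Lemma 7.4: there exists a bidirected necklace grid, with vertical necklaces
bidirected rays, containing no dominated directed necklace grid (of either orientation)
as a subgraph. -/
theorem stmt15 : ∃ (V : Type) (G : Digraph V) (neck : ℕ → Set V)
    (H : ℕ → ℕ → Set V) (Gird : ℕ → List V) (r : ℕ → ℕ → V),
    IsBidirNecklaceGrid G neck H Gird ∧ NecksAreBidirRays G neck r ∧
    ¬ ∃ (B : Digraph V) (neck' : ℕ → Set V) (H' : ℕ → ℕ → Set V) (Gird' : ℕ → List V),
      (∀ u v, B.Adj u v → G.Adj u v) ∧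
      (IsDomDirNecklaceGridOut B neck' H' Gird' ∨
        IsDomDirNecklaceGridIn B neck' H' Gird') := by
  refine ⟨ℕ × ℕ, staircaseGrid, column, bead, girder, fun i l => (i, l),
    isBidirNecklaceGrid_staircaseGrid, necksAreBidirRays_column, ?_⟩
  rintro ⟨B, R, H, Gird, hB, hgrid⟩
  exact not_isDomDirNecklaceGrid_of_le_squareLattice
    (fun u v huv => squareLattice_adj_of_staircaseGrid u v (hB u v huv)) hgrid
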